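/- Generalized Liouville Theorem (local coordinate form): Assume n ≥ 3. Suppose the map r ↦ a(p,r) is injective on I and that ∂_r a(p,r) is a nondegenerate bilinear form on ℝⁿ for every r ∈ I (genericity). Suppose φ(p) = p, Dφ_p = id, D²φ_p = 0, and for every r ∈ I and all U, V ∈ ℝⁿ the function Δ_{r,U,V} vanishes at p together with its first and second Fréchet derivatives. Then D³φ_p = 0. (A 3-isometry of a generic generalized conformal structure with trivial 2-jet at p has trivial 3-jet at p, i.e., generic generalized conformal structures in dimension ≥ 3 are 2-rigid.) -/

import Mathlib

/-- The defect of the isometry equation for a generalized conformal structure given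
in coordinates by the family of bilinear forms `a(x,r)`, with candidate isometry `φ`
and fiber reparameterization `k`:
`Δ_{r,U,V}(x) = a(φ(x), k(x,r))(Dφ_x U, Dφ_x V) − a(x,r)(U,V)`. -/
noncomputable def gcsDelta (n : ℕ)
    (a : (Fin n → ℝ) → ℝ → ((Fin n → ℝ) →L[ℝ] (Fin n → ℝ) →L[ℝ] ℝ))
    (φ : (Fin n → ℝ) → (Fin n → ℝ)) (k : (Fin n → ℝ) → ℝ → ℝ)
    (r : ℝ) (U V : Fin n → ℝ) (x : Fin n → ℝ) : ℝ :=
  a (φ x) (k x r) (fderiv ℝ φ x U) (fderiv ℝ φ x V) - a x r U V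

/-!
Write `κ = k(·, r)` and `b = ∂ᵣa(p, r)`. Injectivity of `a(p, ·)` gives `κ(p) = r`, so
`Δ = F ∘ g - F ∘ h` where `F(x, s, U, V) = a(x, s)(U, V)`, `g = (φ, κ, Dφ U, Dφ V)`,
`h = (id, r, U, V)` and `g(p) = h(p)`. The chain rule turns `DΔ = 0` into `Dκ ⊗ b = 0`, so
`Dκ = 0`: then `g` and `h` agree to first order at `p`, and `D²Δ = 0` becomes
`H(X, Y) b(U, V) + a(T(X, Y, U), V) + a(U, T(X, Y, V)) = 0` with `H = D²κ` and `T = D³φ`.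
Polarizing as in the Koszul formula expresses `a(T(X, Y, U), V)` through `H` and `b`, and the
symmetry of `T` forces the Kulkarni–Nomizu product of `H` and `b` to vanish. In dimension at least
three, a vector pair on which `b` is nonzero can be completed to three biorthogonal pairs, on which
the ratio `H / b` changes sign from each pair to each other one. Hence `H = 0` and `T = 0`.
-/

open scoped Topology

section KulkarniNomizu

/-- The Kulkarni–Nomizu product of two bilinear forms, as a function of four vectors. It is defined
for arbitrary functions of two variables, and the two variables may have different types. -/
def kulkarniNomizu {M N R : Type*} [CommRing R] (h b : M → N → R) (X Y : M) (U V : N) : R :=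
  h X U * b Y V + h Y V * b X U - h X V * b Y U - h Y U * b X V

section Field

variable {K M N : Type*} [Field K] [AddCommGroup M] [Module K M] [AddCommGroup N] [Module K N]

theorem exists_ne_zero_forall_apply_eq_zero_of_card_lt_rank {ι : Type*} [Fintype ι]
    (hM : (Fintype.card ι : Cardinal) < Module.rank K M) (f : ι → M →ₗ[K] K) :
    ∃ z ≠ 0, ∀ i, f i z = 0 := by
  suffices h : ¬ Function.Injective (LinearMap.pi f) by
    simpa [← LinearMap.ker_eq_bot, Submodule.eq_bot_iff, funext_iff, and_comm] using h
  intro hinj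
  have h := (LinearMap.pi f).lift_rank_le_of_injective hinj
  rw [rank_fun', Cardinal.lift_natCast, Cardinal.lift_le_nat_iff] at h
  exact hM.not_ge h

theorem exists_biorthogonal_extension {ι : Type*} [Fintype ι]
    [DecidableEq ι] {b : M →ₗ[K] N →ₗ[K] K} (hb : b.SeparatingLeft)
    (hM : (Fintype.card ι : Cardinal) < Module.rank K M) {x : ι → M} {u : ι → N}
    (hxu : ∀ i j, b (x i) (u j) = if i = j then 1 else 0) :
    ∃ z w, (∀ i, b z (u i) = 0) ∧ (∀ i, b (x i) w = 0) ∧ b z w = 1 := by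
  obtain ⟨z, hz, hzu⟩ :=
    exists_ne_zero_forall_apply_eq_zero_of_card_lt_rank hM fun i => b.flip (u i)
  simp only [LinearMap.flip_apply] at hzu
  obtain ⟨w, hw⟩ : ∃ w, b z w ≠ 0 := by
    by_contra! h
    exact hz (hb z h)
  refine ⟨z, (b z w)⁻¹ • (w - ∑ j, b (x j) w • u j), hzu, fun i => ?_, ?_⟩
  · simp [hxu]
  · simp [hzu, hw]

theorem apply_eq_zero_of_kulkarniNomizu_eq_zero [NeZero (2 : K)] (hM : 3 ≤ Module.rank K M)
    {h b : M →ₗ[K] N →ₗ[K] K} (hb : b.SeparatingLeft)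
    (hKN : ∀ X Y U V, kulkarniNomizu (h · ·) (b · ·) X Y U V = 0) {X : M} {U : N}
    (hXU : b X U = 1) : h X U = 0 := by
  have sum_eq_zero {X Y : M} {U V : N} (hXU : b X U = 1) (hYV : b Y V = 1) (hXV : b X V = 0)
      (hYU : b Y U = 0) : h X U + h Y V = 0 := by
    simpa [kulkarniNomizu, hXU, hYV, hXV, hYU] using hKN X Y U V
  obtain ⟨Y, V, hYU, hXV, hYV⟩ := exists_biorthogonal_extension hb (x := ![X]) (u := ![U])
    (lt_of_lt_of_le (by simp) hM) (by simpa using hXU)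
  simp only [Fin.forall_fin_one, Matrix.cons_val_fin_one] at hYU hXV
  obtain ⟨Z, W, hZ, hW, hZW⟩ := exists_biorthogonal_extension hb (x := ![X, Y]) (u := ![U, V])
    (lt_of_lt_of_le (by norm_num) hM)
    (by simp [Fin.forall_fin_two, hXU, hXV, hYU, hYV])
  simp only [Fin.forall_fin_two, Matrix.cons_val_zero, Matrix.cons_val_one] at hZ hW
  have hXY := sum_eq_zero hXU hYV hXV hYU
  have hXZ := sum_eq_zero hXU hZW hW.1 hZ.1
  have hYZ := sum_eq_zero hYV hZW hW.2 hZ.2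
  have : 2 * h X U = 0 := by linear_combination hXY + hXZ - hYZ
  exact (mul_eq_zero.mp this).resolve_left two_ne_zero

theorem eq_zero_of_kulkarniNomizu_eq_zero [NeZero (2 : K)] (hM : 3 ≤ Module.rank K M)
    {h b : M →ₗ[K] N →ₗ[K] K} (hb : b.SeparatingLeft)
    (hKN : ∀ X Y U V, kulkarniNomizu (h · ·) (b · ·) X Y U V = 0) : h = 0 := by
  ext X U
  obtain rfl | hX := eq_or_ne X 0
  · simp
  obtain ⟨U₁, hU₁⟩ : ∃ U₁, b X U₁ ≠ 0 := by
    by_contra! hXb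
    exact hX (hb X hXb)
  -- The vectors on which `b X` equals `1` span `N`.
  let W := (b X U₁)⁻¹ • U₁
  have hbW : b X W = 1 := by simp [W, hU₁]
  have hbUW : b X (U + (1 - b X U) • W) = 1 := by simp [hbW]
  have hhW := apply_eq_zero_of_kulkarniNomizu_eq_zero hM hb hKN hbW
  simpa [hhW] using apply_eq_zero_of_kulkarniNomizu_eq_zero hM hb hKN hbUW

end Field

section Polarization

variable {α R : Type*} [CommRing R] {h b : α → α → R} {S : α → α → α → α → R}

theorem two_mul_eq_of_polarized_eq_zero (hS₂₃ : ∀ X Y U V, S X Y U V = S X U Y V)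
    (hS : ∀ X Y U V, h X Y * b U V + (S X Y U V + S X Y V U) = 0) (X Y U V : α) :
    2 * S X Y U V = h X V * b Y U - h X U * b Y V - h X Y * b U V := by
  linear_combination hS X Y U V + hS X U Y V - hS X V Y U + hS₂₃ X Y U V - hS₂₃ X Y V U
    - hS₂₃ X U V Y

theorem kulkarniNomizu_eq_zero_of_polarized_eq_zero (hS₁₂ : ∀ X Y U V, S X Y U V = S Y X U V)
    (hS₂₃ : ∀ X Y U V, S X Y U V = S X U Y V)
    (hS : ∀ X Y U V, h X Y * b U V + (S X Y U V + S X Y V U) = 0) (X Y U V : α) :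
    kulkarniNomizu h b X Y U V = 0 := by
  have hXY := two_mul_eq_of_polarized_eq_zero hS₂₃ hS X Y U V
  have hYX := two_mul_eq_of_polarized_eq_zero hS₂₃ hS Y X U V
  have hh : h X Y * b U V = h Y X * b U V := by
    linear_combination hS X Y U V - hS Y X U V - hS₁₂ X Y U V - hS₁₂ X Y V U
  unfold kulkarniNomizu
  linear_combination hXY - hYX - hh - 2 * hS₁₂ X Y U V

end Polarization

theorem trilinear_eq_zero_of_prolongation {K E : Type*} [Field K] [NeZero (2 : K)] [AddCommGroup E]
    [Module K E] (hE : 3 ≤ Module.rank K E) {a b H : E →ₗ[K] E →ₗ[K] K} {T : E → E → E → E}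
    (ha : a.SeparatingLeft) (ha_symm : ∀ U V, a U V = a V U) (hb : b.SeparatingLeft)
    (hT₁₂ : ∀ X Y U, T X Y U = T Y X U) (hT₂₃ : ∀ X Y U, T X Y U = T X U Y)
    (hT : ∀ X Y U V, H X Y * b U V + (a (T X Y U) V + a U (T X Y V)) = 0) (X Y U : E) :
    T X Y U = 0 := by
  have hS₂₃ (X Y U V : E) : a (T X Y U) V = a (T X U Y) V := by rw [hT₂₃]
  have hS (X Y U V : E) : H X Y * b U V + (a (T X Y U) V + a (T X Y V) U) = 0 := by
    rw [ha_symm (T X Y V), hT]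
  have hH : H = 0 := eq_zero_of_kulkarniNomizu_eq_zero hE hb <|
    kulkarniNomizu_eq_zero_of_polarized_eq_zero (fun X Y U V => by rw [hT₁₂]) hS₂₃ hS
  refine ha _ fun V => ?_
  simpa [hH, two_ne_zero] using
    two_mul_eq_of_polarized_eq_zero (S := fun X Y U V => a (T X Y U) V) hS₂₃ hS X Y U V

end KulkarniNomizu

section SecondDerivative

variable {𝕜 E F G : Type*} [NontriviallyNormedField 𝕜] [NormedAddCommGroup E] [NormedSpace 𝕜 E]
  [NormedAddCommGroup F] [NormedSpace 𝕜 F] [NormedAddCommGroup G] [NormedSpace 𝕜 G] {p : E}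

theorem eventually_differentiableAt_of_contDiffAt {f : E → F} {n : WithTop ℕ∞}
    (hf : ContDiffAt 𝕜 n f p) (hn : 1 ≤ n) : ∀ᶠ x in 𝓝 p, DifferentiableAt 𝕜 f x :=
  ((hf.of_le hn).eventually (by simp)).mono fun _ hx => hx.differentiableAt one_ne_zero

theorem differentiableAt_fderiv_of_contDiffAt {f : E → F} (hf : ContDiffAt 𝕜 2 f p) :
    DifferentiableAt 𝕜 (fderiv 𝕜 f) p :=
  (hf.fderiv_right (m := 1) (by norm_num)).differentiableAt one_ne_zero

theorem fderiv_fderiv_comp {f : F → G} {g : E → F} (hf : ContDiffAt 𝕜 2 f (g p))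
    (hg : ContDiffAt 𝕜 2 g p) (X Y : E) :
    fderiv 𝕜 (fderiv 𝕜 (f ∘ g)) p X Y =
      fderiv 𝕜 (fderiv 𝕜 f) (g p) (fderiv 𝕜 g p X) (fderiv 𝕜 g p Y) +
        fderiv 𝕜 f (g p) (fderiv 𝕜 (fderiv 𝕜 g) p X Y) := by
  have hfg : fderiv 𝕜 (f ∘ g) =ᶠ[𝓝 p] fun x => fderiv 𝕜 f (g x) ∘L fderiv 𝕜 g x := by
    filter_upwards [hg.continuousAt.eventually
      (eventually_differentiableAt_of_contDiffAt hf one_le_two),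
      eventually_differentiableAt_of_contDiffAt hg one_le_two] with x hfx hgx
    exact fderiv_comp x hfx hgx
  have hDf : HasFDerivAt (fun x => fderiv 𝕜 f (g x))
      (fderiv 𝕜 (fderiv 𝕜 f) (g p) ∘L fderiv 𝕜 g p) p :=
    (differentiableAt_fderiv_of_contDiffAt hf).hasFDerivAt.comp p
      (hg.differentiableAt two_ne_zero).hasFDerivAt
  have hDg := (differentiableAt_fderiv_of_contDiffAt hg).hasFDerivAt
  simp [hfg.fderiv_eq, (hDf.clm_comp hDg).fderiv, add_comm]

theorem fderiv_fderiv_sub {f g : E → F} (hf : ContDiffAt 𝕜 2 f p) (hg : ContDiffAt 𝕜 2 g p) :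
    fderiv 𝕜 (fderiv 𝕜 (f - g)) p = fderiv 𝕜 (fderiv 𝕜 f) p - fderiv 𝕜 (fderiv 𝕜 g) p := by
  have hfg : fderiv 𝕜 (f - g) =ᶠ[𝓝 p] fderiv 𝕜 f - fderiv 𝕜 g := by
    filter_upwards [eventually_differentiableAt_of_contDiffAt hf one_le_two,
      eventually_differentiableAt_of_contDiffAt hg one_le_two] with x hfx hgx
    exact fderiv_sub hfx hgx
  rw [hfg.fderiv_eq, fderiv_sub (differentiableAt_fderiv_of_contDiffAt hf)
    (differentiableAt_fderiv_of_contDiffAt hg)]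

theorem fderiv_fderiv_clm_comp (L : F →L[𝕜] G) {g : E → F} (hg : ContDiffAt 𝕜 2 g p) (X Y : E) :
    fderiv 𝕜 (fderiv 𝕜 (L ∘ g)) p X Y = L (fderiv 𝕜 (fderiv 𝕜 g) p X Y) := by
  have hL : fderiv 𝕜 L = fun _ => L := funext fun _ => L.fderiv
  simp [fderiv_fderiv_comp L.contDiff.contDiffAt hg, hL]

theorem fderiv_fderiv_prodMk {f : E → F} {g : E → G} (hf : ContDiffAt 𝕜 2 f p)
    (hg : ContDiffAt 𝕜 2 g p) (X Y : E) :
    fderiv 𝕜 (fderiv 𝕜 (fun x => (f x, g x))) p X Y =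
      (fderiv 𝕜 (fderiv 𝕜 f) p X Y, fderiv 𝕜 (fderiv 𝕜 g) p X Y) :=
  Prod.ext (fderiv_fderiv_clm_comp (.fst 𝕜 F G) (hf.prodMk hg) X Y).symm
    (fderiv_fderiv_clm_comp (.snd 𝕜 F G) (hf.prodMk hg) X Y).symm

theorem fderiv_comp_sub_comp {f : F → G} {g h : E → F} (hf : DifferentiableAt 𝕜 f (h p))
    (hg : DifferentiableAt 𝕜 g p) (hh : DifferentiableAt 𝕜 h p) (hgh : g p = h p) :
    fderiv 𝕜 (f ∘ g - f ∘ h) p = fderiv 𝕜 f (h p) ∘L (fderiv 𝕜 g p - fderiv 𝕜 h p) := by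
  have hfg : DifferentiableAt 𝕜 f (g p) := hgh ▸ hf
  rw [fderiv_sub (hfg.comp p hg) (hf.comp p hh), fderiv_comp p hfg hg, fderiv_comp p hf hh, hgh,
    ContinuousLinearMap.comp_sub]

theorem fderiv_fderiv_comp_sub_comp {f : F → G} {g h : E → F} (hf : ContDiffAt 𝕜 2 f (h p))
    (hg : ContDiffAt 𝕜 2 g p) (hh : ContDiffAt 𝕜 2 h p) (hgh : g p = h p)
    (hDgh : fderiv 𝕜 g p = fderiv 𝕜 h p) (X Y : E) :
    fderiv 𝕜 (fderiv 𝕜 (f ∘ g - f ∘ h)) p X Y =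
      fderiv 𝕜 f (h p) (fderiv 𝕜 (fderiv 𝕜 g) p X Y - fderiv 𝕜 (fderiv 𝕜 h) p X Y) := by
  have hfg : ContDiffAt 𝕜 2 f (g p) := hgh ▸ hf
  rw [fderiv_fderiv_sub (hfg.comp p hg) (hf.comp p hh), sub_apply, sub_apply,
    fderiv_fderiv_comp hfg hg, fderiv_fderiv_comp hf hh]
  simp [hgh, hDgh]

theorem fderiv_fderiv_fderiv_apply_comm [IsRCLikeNormedField 𝕜] {f : E → F}
    (hf : ContDiffAt 𝕜 3 f p) (X Y U : E) :
    fderiv 𝕜 (fderiv 𝕜 (fderiv 𝕜 f)) p X Y U = fderiv 𝕜 (fderiv 𝕜 (fderiv 𝕜 f)) p X U Y := by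
  let flip : (E →L[𝕜] E →L[𝕜] F) →L[𝕜] E →L[𝕜] E →L[𝕜] F :=
    (ContinuousLinearMap.flipₗᵢ 𝕜 E E F).toContinuousLinearEquiv
  have hsymm : fderiv 𝕜 (fderiv 𝕜 f) =ᶠ[𝓝 p] flip ∘ fderiv 𝕜 (fderiv 𝕜 f) := by
    filter_upwards [hf.eventually (by simp)] with x hx
    ext Y U
    exact hx.isSymmSndFDerivAt (by norm_num) Y U
  have hD₃ :=
    (differentiableAt_fderiv_of_contDiffAt (hf.fderiv_right (by norm_num))).hasFDerivAt
  have hflip := (flip.hasFDerivAt.comp p hD₃).congr_of_eventuallyEq hsymm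
  exact congrArg (fun L => L X Y U) (hD₃.unique hflip)

theorem fderiv_apply_zero_prodMk {f : E × 𝕜 → F} {r : 𝕜} (hf : DifferentiableAt 𝕜 f (p, r))
    (c : 𝕜) : fderiv 𝕜 f (p, r) (0, c) = c • deriv (fun s => f (p, s)) r := by
  have hfr : HasDerivAt (fun s => f (p, s)) (fderiv 𝕜 f (p, r) (0, 1)) r :=
    hf.hasFDerivAt.comp_hasDerivAt r ((hasDerivAt_const r p).prodMk (hasDerivAt_id r))
  rw [hfr.deriv, ← map_smul]
  simp

end SecondDerivative

section IsometryDefect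

variable {𝕜 E : Type*} [NontriviallyNormedField 𝕜] [NormedAddCommGroup E] [NormedSpace 𝕜 E]

/-- The isometry defect `Δ_{r,U,V}` of a map `φ` of a normed space, for a family `a` of bilinear
forms; `κ` is the slice `k(·, r)` of the fiber reparameterization. -/
noncomputable def isometryDefect (a : E → 𝕜 → E →L[𝕜] E →L[𝕜] 𝕜) (φ : E → E) (κ : E → 𝕜) (r : 𝕜)
    (U V : E) (x : E) : 𝕜 :=
  a (φ x) (κ x) (fderiv 𝕜 φ x U) (fderiv 𝕜 φ x V) - a x r U V

/-- The family `a` as a single scalar function of the point, the fiber parameter and the two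
vectors. -/
def totalForm (a : E → 𝕜 → E →L[𝕜] E →L[𝕜] 𝕜) (z : (E × 𝕜) × E × E) : 𝕜 :=
  a z.1.1 z.1.2 z.2.1 z.2.2

/-- The lift of `φ` and the fiber parameter `κ` to the arguments of `totalForm`, the differential of
`φ` being applied to the vectors `U` and `V`. -/
noncomputable def oneJetLift (φ : E → E) (κ : E → 𝕜) (U V : E) (x : E) : (E × 𝕜) × E × E :=
  ((φ x, κ x), (fderiv 𝕜 φ x U, fderiv 𝕜 φ x V))

/-- The map `φ` has the same value and the same first two derivatives at `p` as the identity. -/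
structure HasTrivialTwoJetAt (𝕜 : Type*) {E : Type*} [NontriviallyNormedField 𝕜]
    [NormedAddCommGroup E] [NormedSpace 𝕜 E] (φ : E → E) (p : E) : Prop where
  apply_eq : φ p = p
  fderiv_eq : fderiv 𝕜 φ p = .id 𝕜 E
  fderiv_fderiv_eq : fderiv 𝕜 (fderiv 𝕜 φ) p = 0

variable {a : E → 𝕜 → E →L[𝕜] E →L[𝕜] 𝕜} {φ : E → E} {κ : E → 𝕜} {p : E} {r : 𝕜}

theorem hasTrivialTwoJetAt_id : HasTrivialTwoJetAt 𝕜 (id : E → E) p where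
  apply_eq := rfl
  fderiv_eq := fderiv_id
  fderiv_fderiv_eq := by
    have hid : fderiv 𝕜 (id : E → E) = fun _ => .id 𝕜 E := funext fun _ => fderiv_id
    simp [hid]

theorem fderiv_fderiv_fderiv_id : fderiv 𝕜 (fderiv 𝕜 (fderiv 𝕜 (id : E → E))) p = 0 := by
  have h : fderiv 𝕜 (fderiv 𝕜 (id : E → E)) = fun _ => 0 :=
    funext fun _ => hasTrivialTwoJetAt_id.fderiv_fderiv_eq
  simp [h]

theorem isometryDefect_eq_comp_sub_comp (U V : E) :
    isometryDefect a φ κ r U V =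
      totalForm a ∘ oneJetLift φ κ U V - totalForm a ∘ oneJetLift id (fun _ => r) U V := by
  ext x
  simp [isometryDefect, totalForm, oneJetLift]

theorem contDiffAt_totalForm {n : WithTop ℕ∞}
    (ha : ContDiffAt 𝕜 n (fun q : E × 𝕜 => a q.1 q.2) (p, r)) (U V : E) :
    ContDiffAt 𝕜 n (totalForm a) ((p, r), (U, V)) :=
  ((ha.comp ((p, r), (U, V)) contDiffAt_fst).clm_apply
    (contDiffAt_fst.comp _ contDiffAt_snd)).clm_apply (contDiffAt_snd.comp _ contDiffAt_snd)

theorem fderiv_totalForm_vertical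
    (ha : DifferentiableAt 𝕜 (fun q : E × 𝕜 => a q.1 q.2) (p, r)) (U V U' V' : E) (c : 𝕜) :
    fderiv 𝕜 (totalForm a) ((p, r), (U, V)) ((0, c), (U', V')) =
      c * deriv (a p) r U V + (a p r U' V + a p r U V') := by
  have hA : HasFDerivAt (fun z : (E × 𝕜) × E × E => a z.1.1 z.1.2)
      (fderiv 𝕜 (fun q : E × 𝕜 => a q.1 q.2) (p, r) ∘L .fst 𝕜 (E × 𝕜) (E × E))
      ((p, r), (U, V)) := by
    have hfst : HasFDerivAt Prod.fst (.fst 𝕜 (E × 𝕜) (E × E)) ((p, r), (U, V)) := hasFDerivAt_fst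
    exact HasFDerivAt.comp (g := fun q : E × 𝕜 => a q.1 q.2) _ ha.hasFDerivAt hfst
  have hU : HasFDerivAt (fun z : (E × 𝕜) × E × E => z.2.1) _ ((p, r), (U, V)) :=
    (ContinuousLinearMap.fst 𝕜 E E ∘L .snd 𝕜 (E × 𝕜) (E × E)).hasFDerivAt
  have hV : HasFDerivAt (fun z : (E × 𝕜) × E × E => z.2.2) _ ((p, r), (U, V)) :=
    (ContinuousLinearMap.snd 𝕜 E E ∘L .snd 𝕜 (E × 𝕜) (E × E)).hasFDerivAt
  have hD := ((hA.clm_apply hU).clm_apply hV).fderiv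
  have hr : fderiv 𝕜 (fun q : E × 𝕜 => a q.1 q.2) (p, r) (0, c) = c • deriv (a p) r :=
    fderiv_apply_zero_prodMk (f := fun q : E × 𝕜 => a q.1 q.2) ha c
  unfold totalForm
  simp only [hD, ContinuousLinearMap.flip_add, add_apply, ContinuousLinearMap.comp_apply,
    ContinuousLinearMap.coe_snd', ContinuousLinearMap.flip_apply, ContinuousLinearMap.coe_fst', hr,
    smul_apply, smul_eq_mul]
  ring

theorem contDiffAt_oneJetLift {n : WithTop ℕ∞} (hφ : ContDiffAt 𝕜 (n + 1) φ p)
    (hκ : ContDiffAt 𝕜 n κ p) (U V : E) : ContDiffAt 𝕜 n (oneJetLift φ κ U V) p := by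
  have hDφ : ContDiffAt 𝕜 n (fderiv 𝕜 φ) p := hφ.fderiv_right le_rfl
  exact ((hφ.of_le le_self_add).prodMk hκ).prodMk
    ((hDφ.clm_apply contDiffAt_const).prodMk (hDφ.clm_apply contDiffAt_const))

theorem fderiv_oneJetLift (hφ : ContDiffAt 𝕜 2 φ p) (hκ : DifferentiableAt 𝕜 κ p) (U V X : E) :
    fderiv 𝕜 (oneJetLift φ κ U V) p X =
      ((fderiv 𝕜 φ p X, fderiv 𝕜 κ p X),
        (fderiv 𝕜 (fderiv 𝕜 φ) p X U, fderiv 𝕜 (fderiv 𝕜 φ) p X V)) := by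
  have hφ' := (hφ.differentiableAt two_ne_zero).hasFDerivAt
  have hDφ (W : E) := (differentiableAt_fderiv_of_contDiffAt hφ).hasFDerivAt.clm_apply
    (hasFDerivAt_const W p)
  have hD := ((hφ'.prodMk hκ.hasFDerivAt).prodMk ((hDφ U).prodMk (hDφ V))).fderiv
  unfold oneJetLift
  simp [hD]

theorem fderiv_fderiv_oneJetLift (hφ : ContDiffAt 𝕜 3 φ p) (hκ : ContDiffAt 𝕜 2 κ p)
    (U V X Y : E) :
    fderiv 𝕜 (fderiv 𝕜 (oneJetLift φ κ U V)) p X Y =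
      ((fderiv 𝕜 (fderiv 𝕜 φ) p X Y, fderiv 𝕜 (fderiv 𝕜 κ) p X Y),
        (fderiv 𝕜 (fderiv 𝕜 (fderiv 𝕜 φ)) p X Y U, fderiv 𝕜 (fderiv 𝕜 (fderiv 𝕜 φ)) p X Y V)) := by
  have hφ₂ : ContDiffAt 𝕜 2 φ p := hφ.of_le (by norm_num)
  have hDφ : ContDiffAt 𝕜 2 (fderiv 𝕜 φ) p := hφ.fderiv_right (by norm_num)
  have hDφW (W : E) : ContDiffAt 𝕜 2 (fun x => fderiv 𝕜 φ x W) p :=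
    hDφ.clm_apply contDiffAt_const
  have hD₃φ (W : E) : fderiv 𝕜 (fderiv 𝕜 (fun x => fderiv 𝕜 φ x W)) p X Y =
      fderiv 𝕜 (fderiv 𝕜 (fderiv 𝕜 φ)) p X Y W :=
    fderiv_fderiv_clm_comp (.apply 𝕜 E W) hDφ X Y
  unfold oneJetLift
  rw [fderiv_fderiv_prodMk (hφ₂.prodMk hκ) ((hDφW U).prodMk (hDφW V)),
    fderiv_fderiv_prodMk hφ₂ hκ, fderiv_fderiv_prodMk (hDφW U) (hDφW V), hD₃φ, hD₃φ]

namespace HasTrivialTwoJetAt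

theorem oneJetLift_apply (h : HasTrivialTwoJetAt 𝕜 φ p) (U V : E) :
    oneJetLift φ κ U V p = ((p, κ p), (U, V)) := by
  simp [oneJetLift, h.apply_eq, h.fderiv_eq]

theorem fderiv_oneJetLift_apply (h : HasTrivialTwoJetAt 𝕜 φ p)
    (hφ : ContDiffAt 𝕜 2 φ p) (hκ : DifferentiableAt 𝕜 κ p) (U V X : E) :
    fderiv 𝕜 (oneJetLift φ κ U V) p X = ((X, fderiv 𝕜 κ p X), (0, 0)) := by
  simp [fderiv_oneJetLift hφ hκ, h.fderiv_eq, h.fderiv_fderiv_eq]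

theorem fderiv_isometryDefect_apply (h : HasTrivialTwoJetAt 𝕜 φ p)
    (ha : ContDiffAt 𝕜 1 (fun q : E × 𝕜 => a q.1 q.2) (p, r)) (hφ : ContDiffAt 𝕜 2 φ p)
    (hκ : ContDiffAt 𝕜 1 κ p) (hκp : κ p = r) (U V X : E) :
    fderiv 𝕜 (isometryDefect a φ κ r U V) p X = fderiv 𝕜 κ p X * deriv (a p) r U V := by
  have hg := (contDiffAt_oneJetLift (hφ.of_le (by norm_num)) hκ U V).differentiableAt one_ne_zero
  have hh := (contDiffAt_oneJetLift (p := p) contDiffAt_id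
    (contDiffAt_const (n := 1) (c := r)) U V).differentiableAt one_ne_zero
  have hhp := hasTrivialTwoJetAt_id.oneJetLift_apply (κ := fun _ : E => r) (p := p) U V
  have hgh : oneJetLift φ κ U V p = oneJetLift id (fun _ => r) U V p := by
    rw [h.oneJetLift_apply, hκp, hhp]
  have hF : DifferentiableAt 𝕜 (totalForm a) (oneJetLift id (fun _ => r) U V p) :=
    hhp ▸ (contDiffAt_totalForm ha U V).differentiableAt one_ne_zero
  rw [isometryDefect_eq_comp_sub_comp, fderiv_comp_sub_comp hF hg hh hgh,
    ContinuousLinearMap.comp_apply, sub_apply,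
    h.fderiv_oneJetLift_apply hφ (hκ.differentiableAt one_ne_zero),
    hasTrivialTwoJetAt_id.fderiv_oneJetLift_apply contDiffAt_id (differentiableAt_const r), hhp]
  simp [fderiv_totalForm_vertical (ha.differentiableAt one_ne_zero)]

theorem fderiv_fderiv_isometryDefect_apply (h : HasTrivialTwoJetAt 𝕜 φ p)
    (ha : ContDiffAt 𝕜 2 (fun q : E × 𝕜 => a q.1 q.2) (p, r)) (hφ : ContDiffAt 𝕜 3 φ p)
    (hκ : ContDiffAt 𝕜 2 κ p) (hκp : κ p = r) (hDκ : fderiv 𝕜 κ p = 0) (U V X Y : E) :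
    fderiv 𝕜 (fderiv 𝕜 (isometryDefect a φ κ r U V)) p X Y =
      fderiv 𝕜 (fderiv 𝕜 κ) p X Y * deriv (a p) r U V +
        (a p r (fderiv 𝕜 (fderiv 𝕜 (fderiv 𝕜 φ)) p X Y U) V +
          a p r U (fderiv 𝕜 (fderiv 𝕜 (fderiv 𝕜 φ)) p X Y V)) := by
  have hg := contDiffAt_oneJetLift (hφ.of_le (by norm_num)) hκ U V
  have hh := contDiffAt_oneJetLift (p := p) contDiffAt_id (contDiffAt_const (n := 2) (c := r)) U V
  have hhp := hasTrivialTwoJetAt_id.oneJetLift_apply (κ := fun _ : E => r) (p := p) U V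
  have hgh : oneJetLift φ κ U V p = oneJetLift id (fun _ => r) U V p := by
    rw [h.oneJetLift_apply, hκp, hhp]
  have hDgh : fderiv 𝕜 (oneJetLift φ κ U V) p = fderiv 𝕜 (oneJetLift id (fun _ => r) U V) p := by
    ext1 Z
    rw [h.fderiv_oneJetLift_apply (hφ.of_le (by norm_num)) (hκ.differentiableAt two_ne_zero),
      hasTrivialTwoJetAt_id.fderiv_oneJetLift_apply contDiffAt_id (differentiableAt_const r)]
    simp [hDκ]
  have hF : ContDiffAt 𝕜 2 (totalForm a) (oneJetLift id (fun _ => r) U V p) :=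
    hhp ▸ contDiffAt_totalForm ha U V
  rw [isometryDefect_eq_comp_sub_comp, fderiv_fderiv_comp_sub_comp hF hg hh hgh hDgh,
    fderiv_fderiv_oneJetLift hφ hκ, fderiv_fderiv_oneJetLift contDiffAt_id contDiffAt_const, hhp,
    h.fderiv_fderiv_eq, hasTrivialTwoJetAt_id.fderiv_fderiv_eq, fderiv_fderiv_fderiv_id,
    ← fderiv_totalForm_vertical (ha.differentiableAt two_ne_zero)]
  simp

theorem fderiv_eq_zero_of_fderiv_isometryDefect_eq_zero [Nontrivial E]
    (h : HasTrivialTwoJetAt 𝕜 φ p) (ha : ContDiffAt 𝕜 1 (fun q : E × 𝕜 => a q.1 q.2) (p, r))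
    (ha' : (deriv (a p) r).toLinearMap₁₂.SeparatingLeft) (hφ : ContDiffAt 𝕜 2 φ p)
    (hκ : ContDiffAt 𝕜 1 κ p) (hκp : κ p = r)
    (hΔ' : ∀ U V, fderiv 𝕜 (isometryDefect a φ κ r U V) p = 0) : fderiv 𝕜 κ p = 0 := by
  obtain ⟨U, V, hUV⟩ : ∃ U V, deriv (a p) r U V ≠ 0 := by
    by_contra! hzero
    obtain ⟨U, hU⟩ := exists_ne (0 : E)
    exact hU (ha' U (hzero U))
  ext X
  have hX := h.fderiv_isometryDefect_apply ha hφ hκ hκp U V X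
  rw [hΔ', zero_apply] at hX
  exact (mul_eq_zero.mp hX.symm).resolve_right hUV

theorem apply_eq_of_isometryDefect_eq_zero (h : HasTrivialTwoJetAt 𝕜 φ p) {I : Set 𝕜}
    (ha_inj : I.InjOn (a p)) (hr : r ∈ I) (hκp : κ p ∈ I)
    (hΔ : ∀ U V, isometryDefect a φ κ r U V p = 0) : κ p = r := by
  refine ha_inj hκp hr ?_
  ext U V
  simpa [isometryDefect, h.apply_eq, h.fderiv_eq, sub_eq_zero] using hΔ U V

end HasTrivialTwoJetAt

end IsometryDefect

/-- The Liouville theorem at a single fiber parameter `r`; the function `κ` stands for `k(·, r)`. -/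
theorem generalized_liouville_general {𝕜 E : Type*} [RCLike 𝕜] [NormedAddCommGroup E]
    [NormedSpace 𝕜 E] (hE : 3 ≤ Module.rank 𝕜 E) {a : E → 𝕜 → E →L[𝕜] E →L[𝕜] 𝕜} {φ : E → E}
    {κ : E → 𝕜} {p : E} {r : 𝕜}
    (ha : ContDiffAt 𝕜 2 (fun q : E × 𝕜 => a q.1 q.2) (p, r))
    (ha_symm : ∀ U V, a p r U V = a p r V U) (ha_sep : (a p r).toLinearMap₁₂.SeparatingLeft)
    (ha' : (deriv (a p) r).toLinearMap₁₂.SeparatingLeft)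
    (hφ : ContDiffAt 𝕜 3 φ p) (hκ : ContDiffAt 𝕜 2 κ p)
    (hφp : HasTrivialTwoJetAt 𝕜 φ p) (hκp : κ p = r)
    (hΔ' : ∀ U V, fderiv 𝕜 (isometryDefect a φ κ r U V) p = 0)
    (hΔ'' : ∀ U V, fderiv 𝕜 (fderiv 𝕜 (isometryDefect a φ κ r U V)) p = 0) :
    fderiv 𝕜 (fderiv 𝕜 (fderiv 𝕜 φ)) p = 0 := by
  have : Nontrivial E := (rank_pos_iff_nontrivial (R := 𝕜)).mp (lt_of_lt_of_le (by simp) hE)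
  have hDκ : fderiv 𝕜 κ p = 0 := hφp.fderiv_eq_zero_of_fderiv_isometryDefect_eq_zero
    (ha.of_le one_le_two) ha' (hφ.of_le (by norm_num)) (hκ.of_le one_le_two) hκp hΔ'
  have hDφ : ContDiffAt 𝕜 2 (fderiv 𝕜 φ) p := hφ.fderiv_right (by norm_num)
  have hT₁₂ (X Y U : E) : fderiv 𝕜 (fderiv 𝕜 (fderiv 𝕜 φ)) p X Y U =
      fderiv 𝕜 (fderiv 𝕜 (fderiv 𝕜 φ)) p Y X U := by
    rw [(hDφ.isSymmSndFDerivAt (by simp)).eq X Y]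
  have hT₂₃ := fderiv_fderiv_fderiv_apply_comm hφ
  ext X Y U
  refine trilinear_eq_zero_of_prolongation hE ha_sep ha_symm ha' hT₁₂ hT₂₃
    (H := (fderiv 𝕜 (fderiv 𝕜 κ) p).toLinearMap₁₂) (fun X Y U V => ?_) X Y U
  simpa [hΔ''] using (hφp.fderiv_fderiv_isometryDefect_apply ha hφ hκ hκp hDκ U V X Y).symm

/-- **Generalized Liouville Theorem (local coordinate form).** In dimension `n ≥ 3`,
for a generic generalized conformal structure (the curve `r ↦ a(p,r)` is injective and
`∂_r a(p,r)` is nondegenerate on `I`), a `3`-isometry `φ` (with shift `k`) having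
trivial `2`-jet at `p` has trivial `3`-jet at `p`: `D³φ_p = 0`. Generic generalized
conformal structures in dimension `≥ 3` are `2`-rigid. -/
theorem generalized_liouville
    (n : ℕ) (hn : 3 ≤ n) (Ω : Set (Fin n → ℝ)) (hΩ : IsOpen Ω)
    (p : Fin n → ℝ) (hp : p ∈ Ω)
    (I : Set ℝ) (hIopen : IsOpen I) (hIconn : I.OrdConnected)
    (hInonempty : I.Nonempty)
    (a : (Fin n → ℝ) → ℝ → ((Fin n → ℝ) →L[ℝ] (Fin n → ℝ) →L[ℝ] ℝ))
    (ha_smooth : ContDiffOn ℝ (⊤ : ℕ∞) (fun q : (Fin n → ℝ) × ℝ => a q.1 q.2) (Ω ×ˢ I))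
    (ha_symm : ∀ x ∈ Ω, ∀ r ∈ I, ∀ U V : Fin n → ℝ, a x r U V = a x r V U)
    (ha_pos : ∀ x ∈ Ω, ∀ r ∈ I, ∀ U : Fin n → ℝ, U ≠ 0 → 0 < a x r U U)
    (ha_inj : Set.InjOn (fun r => a p r) I)
    (ha_generic : ∀ r ∈ I, ∀ U : Fin n → ℝ,
      (∀ V : Fin n → ℝ, deriv (fun s => a p s) r U V = 0) → U = 0)
    (φ : (Fin n → ℝ) → (Fin n → ℝ)) (hφ : ContDiffOn ℝ (⊤ : ℕ∞) φ Ω)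
    (k : (Fin n → ℝ) → ℝ → ℝ)
    (hk : ContDiffOn ℝ (⊤ : ℕ∞) (fun q : (Fin n → ℝ) × ℝ => k q.1 q.2) (Ω ×ˢ I))
    (hk_maps : ∀ x ∈ Ω, ∀ r ∈ I, k x r ∈ I)
    (hφp : φ p = p)
    (hDφp : fderiv ℝ φ p = ContinuousLinearMap.id ℝ (Fin n → ℝ))
    (hD2φp : fderiv ℝ (fderiv ℝ φ) p = 0)
    (hΔ : ∀ r ∈ I, ∀ U V : Fin n → ℝ, gcsDelta n a φ k r U V p = 0)
    (hΔ' : ∀ r ∈ I, ∀ U V : Fin n → ℝ, fderiv ℝ (gcsDelta n a φ k r U V) p = 0)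
    (hΔ'' : ∀ r ∈ I, ∀ U V : Fin n → ℝ,
      fderiv ℝ (fderiv ℝ (gcsDelta n a φ k r U V)) p = 0) :
    fderiv ℝ (fderiv ℝ (fderiv ℝ φ)) p = 0 := by
  obtain ⟨r, hr⟩ := hInonempty
  have hpr : Ω ×ˢ I ∈ 𝓝 (p, r) := (hΩ.prod hIopen).mem_nhds ⟨hp, hr⟩
  have hφ₂ : HasTrivialTwoJetAt ℝ φ p := ⟨hφp, hDφp, hD2φp⟩
  have hκ := (hk.contDiffAt hpr).comp p (contDiffAt_id.prodMk contDiffAt_const)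
  exact generalized_liouville_general (by simpa using hn)
    ((ha_smooth.contDiffAt hpr).of_le ENat.LEInfty.out) (ha_symm p hp r hr)
    (fun U hU => by_contra fun hU₀ => (ha_pos p hp r hr U hU₀).ne' (hU U)) (ha_generic r hr)
    ((hφ.contDiffAt (hΩ.mem_nhds hp)).of_le ENat.LEInfty.out) (hκ.of_le ENat.LEInfty.out) hφ₂
    (hφ₂.apply_eq_of_isometryDefect_eq_zero ha_inj hr (hk_maps p hp r hr) (hΔ r hr))
    (hΔ' r hr) (hΔ'' r hr)
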